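/- Let 0 < ε* and C > 0, let Y = {y₀, y₀+d₁, …, y₀+d_p} ⊆ ℝⁿ with Δ = maxᵢ‖dᵢ‖ > 0, let L = [d₁ ⋯ d_p] ∈ ℝ^{n×p} have full column rank with κ(L) = ‖L†‖‖L‖ satisfying Cε*κ(L) < 1, and let B = [−𝟙 I_p]. Suppose P̄ ∈ ℝ^{n×p} is such that there exist Ẽ ∈ ℝ^{p×n} and F̃ ∈ ℝ^{n×p} with P̄ + F̃ = (Lᵀ + Ẽ)†, ‖Ẽ‖ ≤ Cε*‖L‖, ‖F̃‖ ≤ Cε*‖P̄‖, and suppose f̄(y) = (1+ε_y)f(y) with |ε_y| ≤ ε* for every y ∈ Y. Let f_M = max{|f(y)| : y ∈ Y}, 𝕗 the vector of f values on Y, 𝕗̄ the vector of f̄ values on Y, and L̂ = L/Δ. Then ‖(Lᵀ)†B𝕗 − P̄B𝕗̄‖ ≤ (p+1)·f_M·‖L̂†‖·ε*·( √2·C·κ(L)/(1 − Cκ(L)ε*) + (C+1)/((1 − Cε*)(1 − Cκ(L)ε*)) )·(1/Δ). -/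

import Mathlib

/-!
Put `A = Lᵀ`, so that `A† = (L†)ᵀ`, and let `Q = (A + Ẽ)†`. The error splits as
`A†B𝕗 - P̄B𝕗̄ = (A† - Q)B𝕗 + F̃B𝕗 + P̄B(𝕗 - 𝕗̄)`, where `‖B v‖ ≤ (p+1) max |vᵢ|`
(`norm_B_mulVec_le`). It remains to bound the three matrices.

With `η = Cε*κ < 1`, the perturbed matrix keeps full rank (`perturbed_left_inverse`), and
`‖Q‖ ≤ ‖L†‖ / (1 - η)` (`perturbed_norm_le`). The difference `Q - A†` is a sum of two terms with
orthogonal ranges, one controlled by `‖Q‖` and the other by `‖A†‖` (`pinv_perturbation`); both are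
at most `‖L†‖ / (1 - η)`, which yields the factor `√2`. Finally `‖P̄‖ ≤ ‖Q‖ / (1 - Cε*)`, where
`Cε* < 1` because `κ ≥ 1`.

All matrix norms are handled through Mathlib's `L2Operator` norm, which is `spec` by definition.
The scope is confined to a section so that it does not affect the main statement.
-/

open scoped Matrix
noncomputable section

/-- `N` is the Moore–Penrose pseudoinverse of `M` (the four Penrose equations). -/
def IsMPInv {m n : ℕ} (M : Matrix (Fin m) (Fin n) ℝ) (N : Matrix (Fin n) (Fin m) ℝ) : Prop :=
  M * N * M = M ∧ N * M * N = N ∧ (M * N)ᵀ = M * N ∧ (N * M)ᵀ = N * M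

/-- View a plain vector in `ℝⁿ` as an element of Euclidean space (with the ℓ² norm). -/
def toE {n : ℕ} (v : Fin n → ℝ) : EuclideanSpace ℝ (Fin n) :=
  (WithLp.equiv 2 (Fin n → ℝ)).symm v

/-- The spectral (ℓ² operator) norm of a matrix. -/
noncomputable def spec {m n : ℕ} (A : Matrix (Fin m) (Fin n) ℝ) : ℝ :=
  ‖LinearMap.toContinuousLinearMap (Matrix.toEuclideanLin A)‖

section PseudoinversePerturbation

open scoped Matrix.Norms.L2Operator

theorem spec_eq_norm {m n : ℕ} (A : Matrix (Fin m) (Fin n) ℝ) : spec A = ‖A‖ := rfl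

theorem norm_transpose' {m n : ℕ} (A : Matrix (Fin m) (Fin n) ℝ) : ‖Aᵀ‖ = ‖A‖ := by
  rw [← Matrix.conjTranspose_eq_transpose_of_trivial, Matrix.l2_opNorm_conjTranspose]

theorem norm_transpose_mul_self' {m n : ℕ} (A : Matrix (Fin m) (Fin n) ℝ) :
    ‖Aᵀ * A‖ = ‖A‖ * ‖A‖ := by
  rw [← Matrix.conjTranspose_eq_transpose_of_trivial, Matrix.l2_opNorm_conjTranspose_mul_self]

theorem norm_le_one_of_projection {n : ℕ} {P : Matrix (Fin n) (Fin n) ℝ}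
    (hs : Pᵀ = P) (hi : P * P = P) : ‖P‖ ≤ 1 := by
  have h := norm_transpose_mul_self' P
  rw [hs, hi] at h
  nlinarith [norm_nonneg P]

theorem mul_eq_one_of_rank {n p : ℕ} {L : Matrix (Fin n) (Fin p) ℝ}
    {N : Matrix (Fin p) (Fin n) ℝ} (hrank : L.rank = p) (h : L * N * L = L) : N * L = 1 := by
  have hinj : Function.Injective L.mulVec := by
    rw [Matrix.mulVec_injective_iff, linearIndependent_iff_card_eq_finrank_span,
      Set.finrank, ← Matrix.rank_eq_finrank_span_cols, hrank, Fintype.card_fin]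
  refine Matrix.ext_of_mulVec_single fun i => hinj ?_
  rw [Matrix.mulVec_mulVec, ← Matrix.mul_assoc, h, Matrix.one_mulVec]

/-- The perturbation `L + E` of a left-invertible `L` stays left-invertible, because a matrix `Z`
killed by `L + E` satisfies `Z = -(N * E) * Z` with `‖N * E‖ < 1`. -/
theorem perturbed_left_inverse {n p : ℕ} {L E : Matrix (Fin n) (Fin p) ℝ}
    {N R : Matrix (Fin p) (Fin n) ℝ} (hNL : N * L = 1) (hη : ‖N‖ * ‖E‖ < 1)
    (hR : (L + E) * R * (L + E) = L + E) : R * (L + E) = 1 := by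
  set Z := R * (L + E) - 1 with hZ
  have hMZ : (L + E) * Z = 0 := by
    rw [hZ, Matrix.mul_sub, ← Matrix.mul_assoc, hR, Matrix.mul_one, sub_self]
  have hZeq : Z = -(N * E * Z) := by
    have h : N * ((L + E) * Z) = 0 := by rw [hMZ, Matrix.mul_zero]
    rw [← Matrix.mul_assoc, Matrix.mul_add, hNL, Matrix.add_mul, Matrix.one_mul] at h
    exact eq_neg_of_add_eq_zero_left h
  have h1 : ‖Z‖ ≤ ‖N‖ * ‖E‖ * ‖Z‖ := by
    calc ‖Z‖ = ‖N * E * Z‖ := by rw [← norm_neg (N * E * Z), ← hZeq]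
      _ ≤ ‖N * E‖ * ‖Z‖ := Matrix.l2_opNorm_mul _ _
      _ ≤ ‖N‖ * ‖E‖ * ‖Z‖ := by gcongr; exact Matrix.l2_opNorm_mul _ _
  have h2 : ‖Z‖ = 0 := by nlinarith [norm_nonneg Z]
  exact sub_eq_zero.mp (norm_eq_zero.mp h2)

/-- The pseudoinverse `R` of `L + E` satisfies `‖R‖ ≤ ‖N‖ / (1 - ‖N‖‖E‖)`: write
`R = N * L * R = N * ((L + E) * R - E * R)` and use that `(L + E) * R` is an orthogonal
projection. -/
theorem perturbed_norm_le {n p : ℕ} {L E : Matrix (Fin n) (Fin p) ℝ}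
    {N R : Matrix (Fin p) (Fin n) ℝ} (hNL : N * L = 1)
    (hR : IsMPInv (L + E) R) : ‖R‖ * (1 - ‖N‖ * ‖E‖) ≤ ‖N‖ := by
  have hP : ‖(L + E) * R‖ ≤ 1 := by
    refine norm_le_one_of_projection hR.2.2.1 ?_
    rw [← Matrix.mul_assoc, hR.1]
  have hReq : R = N * ((L + E) * R - E * R) := by
    rw [Matrix.add_mul, add_sub_cancel_right, ← Matrix.mul_assoc, hNL, Matrix.one_mul]
  have h : ‖R‖ ≤ ‖N‖ * (1 + ‖E‖ * ‖R‖) := by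
    calc ‖R‖ = ‖N * ((L + E) * R - E * R)‖ := by rw [← hReq]
      _ ≤ ‖N‖ * ‖(L + E) * R - E * R‖ := Matrix.l2_opNorm_mul _ _
      _ ≤ ‖N‖ * (‖(L + E) * R‖ + ‖E * R‖) := by gcongr; exact norm_sub_le _ _
      _ ≤ ‖N‖ * (1 + ‖E‖ * ‖R‖) := by gcongr; exact Matrix.l2_opNorm_mul _ _
  linarith

/-- Pythagoras for matrices with orthogonal ranges. -/
theorem norm_add_sq_le_of_orthogonal {m n : ℕ} {X Y : Matrix (Fin m) (Fin n) ℝ}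
    (h : Xᵀ * Y = 0) : ‖X + Y‖ ^ 2 ≤ ‖X‖ ^ 2 + ‖Y‖ ^ 2 := by
  have h' : Yᵀ * X = 0 := by
    rw [← Matrix.transpose_transpose X, ← Matrix.transpose_mul, h, Matrix.transpose_zero]
  have e : (X + Y)ᵀ * (X + Y) = Xᵀ * X + Yᵀ * Y := by
    rw [Matrix.transpose_add, Matrix.add_mul, Matrix.mul_add, Matrix.mul_add, h, h']
    simp
  calc ‖X + Y‖ ^ 2 = ‖Xᵀ * X + Yᵀ * Y‖ := by rw [← e, norm_transpose_mul_self', sq]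
    _ ≤ ‖Xᵀ * X‖ + ‖Yᵀ * Y‖ := norm_add_le _ _
    _ = ‖X‖ ^ 2 + ‖Y‖ ^ 2 := by simp only [norm_transpose_mul_self', sq]

/-- Wedin-type bound. Writing `A = Lᵀ`, `A† = Nᵀ`, `Ã = (L + E)ᵀ`, `Ã† = Rᵀ`, one has
`Ã† - A† = -Ã† Eᵀ A† + (1 - Ã† Ã) E (A†)ᵀ A†`, and the two summands have orthogonal ranges. -/
theorem pinv_perturbation {n p : ℕ} {L E : Matrix (Fin n) (Fin p) ℝ}
    {N R : Matrix (Fin p) (Fin n) ℝ} (hN : IsMPInv L N) (hNL : N * L = 1)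
    (hR : IsMPInv (L + E) R) (hRM : R * (L + E) = 1) :
    ‖Rᵀ - Nᵀ‖ ^ 2 ≤ (‖N‖ * ‖E‖) ^ 2 * (‖R‖ ^ 2 + ‖N‖ ^ 2) := by
  set M := L + E with hM
  have hE : E = M - L := by rw [hM, add_sub_cancel_left]
  have hPs : (1 - M * R)ᵀ = 1 - M * R := by
    rw [Matrix.transpose_sub, Matrix.transpose_one, hR.2.2.1]
  have hRP : R * (1 - M * R) = 0 := by
    rw [Matrix.mul_sub, Matrix.mul_one, ← Matrix.mul_assoc, hRM, Matrix.one_mul, sub_self]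
  have hPM : (1 - M * R) * M = 0 := by
    rw [Matrix.sub_mul, Matrix.one_mul, hR.1, sub_self]
  have hP : ‖1 - M * R‖ ≤ 1 := by
    refine norm_le_one_of_projection hPs ?_
    rw [Matrix.sub_mul, Matrix.one_mul, Matrix.mul_assoc, hRP, Matrix.mul_zero, sub_zero]
  have hLN : L * (N * Nᵀ) = Nᵀ := by
    rw [← Matrix.mul_assoc, ← hN.2.2.1, ← Matrix.transpose_mul, ← Matrix.mul_assoc, hN.2.1]
  have hLtN : Lᵀ * Nᵀ = 1 := by rw [← Matrix.transpose_mul, hNL, Matrix.transpose_one]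
  have hRMt : Rᵀ * Mᵀ = M * R := by rw [← Matrix.transpose_mul, hR.2.2.1]
  have key : Rᵀ - Nᵀ = -(Rᵀ * (Eᵀ * Nᵀ)) + (1 - M * R) * (E * (N * Nᵀ)) := by
    have e1 : Rᵀ * (Eᵀ * Nᵀ) = M * R * Nᵀ - Rᵀ := by
      rw [hE, Matrix.transpose_sub, Matrix.sub_mul, hLtN, Matrix.mul_sub, Matrix.mul_one,
        ← Matrix.mul_assoc, hRMt]
    have e2 : (1 - M * R) * (E * (N * Nᵀ)) = M * R * Nᵀ - Nᵀ := by
      rw [hE, Matrix.sub_mul M, hLN, Matrix.mul_sub, ← Matrix.mul_assoc, hPM, Matrix.zero_mul,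
        Matrix.sub_mul, Matrix.one_mul]
      abel
    rw [e1, e2]; abel
  have horth : (-(Rᵀ * (Eᵀ * Nᵀ)))ᵀ * ((1 - M * R) * (E * (N * Nᵀ))) = 0 := by
    rw [Matrix.transpose_neg, Matrix.transpose_mul, Matrix.transpose_transpose, Matrix.neg_mul,
      Matrix.mul_assoc, ← Matrix.mul_assoc R, hRP, Matrix.zero_mul, Matrix.mul_zero, neg_zero]
  have hX : ‖-(Rᵀ * (Eᵀ * Nᵀ))‖ ≤ ‖R‖ * (‖E‖ * ‖N‖) := by
    rw [norm_neg]
    refine (Matrix.l2_opNorm_mul _ _).trans ?_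
    rw [norm_transpose']
    gcongr
    refine (Matrix.l2_opNorm_mul _ _).trans ?_
    rw [norm_transpose', norm_transpose']
  have hY : ‖(1 - M * R) * (E * (N * Nᵀ))‖ ≤ 1 * (‖E‖ * (‖N‖ * ‖N‖)) := by
    refine (Matrix.l2_opNorm_mul _ _).trans ?_
    gcongr
    refine (Matrix.l2_opNorm_mul _ _).trans ?_
    gcongr
    refine (Matrix.l2_opNorm_mul _ _).trans ?_
    rw [norm_transpose']
  calc ‖Rᵀ - Nᵀ‖ ^ 2 ≤ ‖-(Rᵀ * (Eᵀ * Nᵀ))‖ ^ 2 + ‖(1 - M * R) * (E * (N * Nᵀ))‖ ^ 2 := by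
        rw [key]; exact norm_add_sq_le_of_orthogonal horth
    _ ≤ (‖R‖ * (‖E‖ * ‖N‖)) ^ 2 + (1 * (‖E‖ * (‖N‖ * ‖N‖))) ^ 2 := by gcongr
    _ = (‖N‖ * ‖E‖) ^ 2 * (‖R‖ ^ 2 + ‖N‖ ^ 2) := by ring

/-- `‖B‖ ≤ √(p+1)` for `B = [-𝟙 I]`: since `(B v)ᵢ = vᵢ₊₁ - v₀`, the claim reduces to
`0 ≤ v₀² + 2 v₀ S + p ∑ vᵢ₊₁²` with `S = ∑ vᵢ₊₁`, which follows from `S² ≤ p ∑ vᵢ₊₁²`. -/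
theorem norm_B_mulVec_le {p : ℕ} {B : Matrix (Fin p) (Fin (p + 1)) ℝ}
    (hB : B = Matrix.of fun (i : Fin p) (j : Fin (p + 1)) =>
      if (j : ℕ) = 0 then (-1 : ℝ) else if (j : ℕ) = (i : ℕ) + 1 then 1 else 0)
    (v : Fin (p + 1) → ℝ) {c : ℝ} (hc : ∀ i, |v i| ≤ c) :
    ‖toE (B.mulVec v)‖ ≤ (p + 1) * c := by
  have hc0 : 0 ≤ c := (abs_nonneg _).trans (hc 0)
  have hBv : ∀ i, B.mulVec v i = v i.succ - v 0 := by
    intro i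
    simp [hB, Matrix.mulVec, dotProduct, Fin.sum_univ_succ, Fin.val_inj]
    ring
  have hsq : ‖toE (B.mulVec v)‖ ^ 2 = ∑ i : Fin p, (v i.succ - v 0) ^ 2 := by
    rw [EuclideanSpace.norm_sq_eq]
    refine Finset.sum_congr rfl fun i _ => ?_
    rw [Real.norm_eq_abs, sq_abs, ← hBv]; rfl
  have hexp : ∑ i : Fin p, (v i.succ - v 0) ^ 2
      = ∑ i : Fin p, v i.succ ^ 2 - 2 * v 0 * ∑ i : Fin p, v i.succ + p * v 0 ^ 2 := by
    simp only [sub_sq, Finset.sum_add_distrib, Finset.sum_sub_distrib, Finset.mul_sum]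
    simp
    exact Finset.sum_congr rfl fun i _ => by ring
  have hcs : (∑ i : Fin p, v i.succ) ^ 2 ≤ p * ∑ i : Fin p, v i.succ ^ 2 := by
    simpa using sq_sum_le_card_mul_sum_sq (s := Finset.univ) (f := fun i : Fin p => v i.succ)
  have hv : ∀ i, v i ^ 2 ≤ c ^ 2 := fun i => sq_le_sq' (abs_le.mp (hc i)).1 (abs_le.mp (hc i)).2
  have hsum : ∑ i : Fin p, v i.succ ^ 2 ≤ p * c ^ 2 := by
    calc _ ≤ ∑ _i : Fin p, c ^ 2 := Finset.sum_le_sum fun i _ => hv i.succ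
      _ = p * c ^ 2 := by simp
  refine le_of_sq_le_sq ?_ (by positivity)
  rw [hsq, hexp]
  have h0 := hv 0
  have hp : (0 : ℝ) ≤ p := p.cast_nonneg
  nlinarith [sq_nonneg (v 0 + ∑ i : Fin p, v i.succ), mul_le_mul_of_nonneg_left h0 hp,
    mul_le_mul_of_nonneg_left hsum hp]

theorem norm_toE_mulVec_le {m n : ℕ} (A : Matrix (Fin m) (Fin n) ℝ) (x : Fin n → ℝ) :
    ‖toE (A.mulVec x)‖ ≤ ‖A‖ * ‖toE x‖ := Matrix.l2_opNorm_mulVec A (toE x)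

/-- The bound with `‖L†‖` in place of `‖L̂†‖ / Δ`, for an abstract bound `c` on the data. The error
splits as `(A† - Q) B u + F B u + P̄ B (u - w)` with `A = Lᵀ`, `Q = (A + Ẽ)†`. -/
theorem gsg_error_core {n p : ℕ} {εs C : ℝ} (hεs : 0 < εs) (hC : 0 < C) (hp : p ≠ 0)
    {L : Matrix (Fin n) (Fin p) ℝ} (hrank : L.rank = p)
    {Ldag : Matrix (Fin p) (Fin n) ℝ} (hLdag : IsMPInv L Ldag)
    {κ : ℝ} (hκ : κ = spec Ldag * spec L) (hcond : C * εs * κ < 1)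
    {B : Matrix (Fin p) (Fin (p + 1)) ℝ}
    (hB : B = Matrix.of fun (i : Fin p) (j : Fin (p + 1)) =>
      if (j : ℕ) = 0 then (-1 : ℝ) else if (j : ℕ) = (i : ℕ) + 1 then 1 else 0)
    {Pbar : Matrix (Fin n) (Fin p) ℝ}
    {Et : Matrix (Fin p) (Fin n) ℝ} {Ft : Matrix (Fin n) (Fin p) ℝ}
    {Q : Matrix (Fin n) (Fin p) ℝ} (hQ : IsMPInv (Lᵀ + Et) Q)
    (hPbar : Pbar + Ft = Q)
    (hEt : spec Et ≤ C * εs * spec L) (hFt : spec Ft ≤ C * εs * spec Pbar)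
    (u w : Fin (p + 1) → ℝ) {c : ℝ} (hu : ∀ i, |u i| ≤ c) (huw : ∀ i, |u i - w i| ≤ εs * c) :
    ‖toE (Matrix.mulVec Ldagᵀ (Matrix.mulVec B u)) - toE (Matrix.mulVec Pbar (Matrix.mulVec B w))‖
      ≤ (p + 1) * c * spec Ldag * εs
          * (Real.sqrt 2 * C * κ / (1 - C * κ * εs)
              + (C + 1) / ((1 - C * εs) * (1 - C * κ * εs))) := by
  simp only [spec_eq_norm] at *
  have hc0 : 0 ≤ c := (abs_nonneg _).trans (hu 0)
  have hNL : Ldag * L = 1 := mul_eq_one_of_rank hrank hLdag.1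
  have hκ1 : 1 ≤ κ := by
    have : Nonempty (Fin p) := ⟨⟨0, Nat.pos_of_ne_zero hp⟩⟩
    have h1 : ‖(1 : Matrix (Fin p) (Fin p) ℝ)‖ = 1 := norm_one
    rw [hκ, ← h1, ← hNL]
    exact Matrix.l2_opNorm_mul _ _
  set a := ‖Ldag‖ with ha
  have ha0 : 0 ≤ a := norm_nonneg _
  have hη : a * ‖Etᵀ‖ ≤ C * εs * κ := by
    rw [norm_transpose', hκ]
    calc a * ‖Et‖ ≤ a * (C * εs * ‖L‖) := by gcongr
      _ = _ := by ring
  have hR : IsMPInv (L + Etᵀ) Qᵀ := by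
    have hM : L + Etᵀ = (Lᵀ + Et)ᵀ := by
      rw [Matrix.transpose_add, Matrix.transpose_transpose]
    obtain ⟨h1, h2, h3, h4⟩ := hQ
    rw [hM]
    refine ⟨?_, ?_, ?_, ?_⟩
    · rw [← Matrix.transpose_mul, ← Matrix.transpose_mul, ← Matrix.mul_assoc, h1]
    · rw [← Matrix.transpose_mul, ← Matrix.transpose_mul, ← Matrix.mul_assoc, h2]
    · rw [← Matrix.transpose_mul, h4, h4]
    · rw [← Matrix.transpose_mul, h3, h3]
  have hRM := perturbed_left_inverse hNL (hη.trans_lt hcond) hR.1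
  have hs : 0 < 1 - C * κ * εs := by linarith
  have ht : 0 < 1 - C * εs := by nlinarith [mul_pos hC hεs]
  have hQn : ‖Q‖ ≤ a / (1 - C * κ * εs) := by
    rw [le_div_iff₀ hs]
    have h := perturbed_norm_le hNL hR
    rw [norm_transpose' Q] at h
    nlinarith [norm_nonneg Q]
  have han : a ≤ a / (1 - C * κ * εs) := by
    rw [le_div_iff₀ hs]
    have : 0 ≤ C * κ * εs := by positivity
    nlinarith
  have hD : ‖Ldagᵀ - Q‖ ≤ Real.sqrt 2 * (C * εs * κ) * (a / (1 - C * κ * εs)) := by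
    have h := pinv_perturbation hLdag hNL hR hRM
    rw [Matrix.transpose_transpose, norm_transpose' Q, norm_sub_rev] at h
    refine le_of_sq_le_sq (h.trans ?_) (by positivity)
    calc (‖Ldag‖ * ‖Etᵀ‖) ^ 2 * (‖Q‖ ^ 2 + ‖Ldag‖ ^ 2)
        ≤ (C * εs * κ) ^ 2 * ((a / (1 - C * κ * εs)) ^ 2 + (a / (1 - C * κ * εs)) ^ 2) := by
          gcongr
      _ = (Real.sqrt 2 * (C * εs * κ) * (a / (1 - C * κ * εs))) ^ 2 := by
          have h2 : Real.sqrt 2 ^ 2 = 2 := Real.sq_sqrt (by norm_num)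
          simp only [mul_pow, h2]
          ring
  have hPn : ‖Pbar‖ ≤ a / (1 - C * κ * εs) / (1 - C * εs) := by
    rw [le_div_iff₀ ht]
    have h : ‖Pbar‖ ≤ ‖Q‖ + ‖Ft‖ := by
      rw [eq_sub_of_add_eq hPbar]; exact norm_sub_le _ _
    linarith
  have hBu := norm_B_mulVec_le hB u hu
  have hBuw : ‖toE (B.mulVec (u - w))‖ ≤ (p + 1) * (εs * c) := norm_B_mulVec_le hB (u - w) huw
  have hsplit : toE (Ldagᵀ.mulVec (B.mulVec u)) - toE (Pbar.mulVec (B.mulVec w))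
      = toE ((Ldagᵀ - Q).mulVec (B.mulVec u)) + toE (Ft.mulVec (B.mulVec u))
        + toE (Pbar.mulVec (B.mulVec (u - w))) := by
    have h : Ldagᵀ.mulVec (B.mulVec u) - Pbar.mulVec (B.mulVec w)
        = (Ldagᵀ - Q).mulVec (B.mulVec u) + Ft.mulVec (B.mulVec u)
          + Pbar.mulVec (B.mulVec (u - w)) := by
      rw [← hPbar, Matrix.sub_mulVec, Matrix.add_mulVec, Matrix.mulVec_sub, Matrix.mulVec_sub]
      abel
    exact congrArg toE h
  have hT1 : ‖toE ((Ldagᵀ - Q).mulVec (B.mulVec u))‖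
      ≤ Real.sqrt 2 * (C * εs * κ) * (a / (1 - C * κ * εs)) * ((p + 1) * c) :=
    (norm_toE_mulVec_le _ _).trans (by gcongr)
  have hT2 : ‖toE (Ft.mulVec (B.mulVec u))‖
      ≤ C * εs * (a / (1 - C * κ * εs) / (1 - C * εs)) * ((p + 1) * c) := by
    refine (norm_toE_mulVec_le _ _).trans ?_
    gcongr
    exact hFt.trans (by gcongr)
  have hT3 : ‖toE (Pbar.mulVec (B.mulVec (u - w)))‖
      ≤ a / (1 - C * κ * εs) / (1 - C * εs) * ((p + 1) * (εs * c)) :=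
    (norm_toE_mulVec_le _ _).trans (by gcongr)
  rw [hsplit]
  refine (norm_add₃_le.trans (add_le_add (add_le_add hT1 hT2) hT3)).trans_eq ?_
  field_simp
  ring

end PseudoinversePerturbation

/-- **Floating point error bound for the generalized simplex gradient.**
With `Δ = maxᵢ‖dᵢ‖` and `L̂ = L/Δ` (so `L̂† = Δ·L†`),
`‖(Lᵀ)†B𝕗 − P̄B𝕗̄‖ ≤ (p+1)·f_M·‖L̂†‖·ε*·(√2Cκ(L)/(1 − Cκ(L)ε*)
  + (C+1)/((1 − Cε*)(1 − Cκ(L)ε*)))·(1/Δ)`. -/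
theorem gsg_floating_point_error {n p : ℕ} (εs C : ℝ) (hεs : 0 < εs) (hC : 0 < C)
    (y₀ : EuclideanSpace ℝ (Fin n)) (d : Fin p → EuclideanSpace ℝ (Fin n))
    (Δ : ℝ) (hΔ : Δ = ⨆ i, ‖d i‖) (hΔpos : 0 < Δ)
    (L : Matrix (Fin n) (Fin p) ℝ) (hL : L = Matrix.of fun i j => d j i)
    (hrank : L.rank = p)
    (Ldag : Matrix (Fin p) (Fin n) ℝ) (hLdag : IsMPInv L Ldag)
    (κ : ℝ) (hκ : κ = spec Ldag * spec L) (hcond : C * εs * κ < 1)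
    (B : Matrix (Fin p) (Fin (p + 1)) ℝ)
    (hB : B = Matrix.of fun (i : Fin p) (j : Fin (p + 1)) =>
      if (j : ℕ) = 0 then (-1 : ℝ) else if (j : ℕ) = (i : ℕ) + 1 then 1 else 0)
    (Pbar : Matrix (Fin n) (Fin p) ℝ)
    (Et : Matrix (Fin p) (Fin n) ℝ) (Ft : Matrix (Fin n) (Fin p) ℝ)
    (Q : Matrix (Fin n) (Fin p) ℝ) (hQ : IsMPInv (Lᵀ + Et) Q)
    (hPbar : Pbar + Ft = Q)
    (hEt : spec Et ≤ C * εs * spec L) (hFt : spec Ft ≤ C * εs * spec Pbar)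
    (f fbar : EuclideanSpace ℝ (Fin n) → ℝ)
    (ε : Fin (p + 1) → ℝ) (hε : ∀ i, |ε i| ≤ εs)
    (y : Fin (p + 1) → EuclideanSpace ℝ (Fin n))
    (hy : y = Fin.cons y₀ fun i => y₀ + d i)
    (hfbar : ∀ i, fbar (y i) = (1 + ε i) * f (y i))
    (fM : ℝ) (hfM : fM = ⨆ i, |f (y i)|) :
    ‖toE (Matrix.mulVec Ldagᵀ (Matrix.mulVec B fun i => f (y i)))
        - toE (Matrix.mulVec Pbar (Matrix.mulVec B fun i => fbar (y i)))‖
      ≤ (p + 1) * fM * spec (Δ • Ldag) * εs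
          * (Real.sqrt 2 * C * κ / (1 - C * κ * εs)
              + (C + 1) / ((1 - C * εs) * (1 - C * κ * εs))) * (1 / Δ) := by
  have hp : p ≠ 0 := by
    -- with no directions, the supremum defining `Δ` is over an empty family, hence `0`
    rintro rfl
    rw [Real.iSup_of_isEmpty] at hΔ
    exact hΔpos.ne' hΔ
  have hu : ∀ i, |f (y i)| ≤ fM := fun i => by
    rw [hfM]
    exact le_ciSup (f := fun i => |f (y i)|) (Set.finite_range _).bddAbove i
  have huw : ∀ i, |f (y i) - fbar (y i)| ≤ εs * fM := fun i => by
    have h : f (y i) - fbar (y i) = -(ε i * f (y i)) := by rw [hfbar]; ring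
    rw [h, abs_neg, abs_mul]
    exact mul_le_mul (hε i) (hu i) (abs_nonneg _) hεs.le
  have hsmul : spec (Δ • Ldag) = Δ * spec Ldag := by
    simp only [spec, map_smul, norm_smul, Real.norm_eq_abs, abs_of_pos hΔpos]
  refine (gsg_error_core hεs hC hp hrank hLdag hκ hcond hB hQ hPbar hEt hFt
    (fun i => f (y i)) (fun i => fbar (y i)) hu huw).trans_eq ?_
  rw [hsmul]
  generalize Real.sqrt 2 * C * κ / (1 - C * κ * εs)
    + (C + 1) / ((1 - C * εs) * (1 - C * κ * εs)) = T
  field_simp
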